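/- Let G be a finite group acting on ℝ³ by homeomorphisms (a continuous action of G on EuclideanSpace ℝ (Fin 3)) such that the action is free: if g · x = x for some x ∈ ℝ³ then g is the identity. Then G is the trivial group. Equivalently, any group acting freely and properly discontinuously by homeomorphisms on ℝ³ is torsion-free. -/

import Mathlib

open Pointwise

namespace FreeR3

noncomputable section

/-- Augmented ordered chains: formal integer combinations of finite lists of points. -/
abbrev Ch (Y : Type*) := List Y →₀ ℤ

/-- The cone operator: put a new first vertex. -/
def cone {Y : Type*} (v : Y) : Ch Y →ₗ[ℤ] Ch Y := Finsupp.lmapDomain ℤ ℤ (List.cons v)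

/-- Boundary of a list. -/
def bd {Y : Type*} : List Y → Ch Y
  | [] => 0
  | v :: t => Finsupp.single t 1 - cone v (bd t)

/-- Linear extension of a function on lists. -/
abbrev lin {Y : Type*} {A : Type*} [AddCommGroup A] (φ : List Y → A) : Ch Y →ₗ[ℤ] A :=
  Finsupp.linearCombination ℤ φ

/-- Boundary operator. -/
def bdry {Y : Type*} : Ch Y →ₗ[ℤ] Ch Y := lin bd

/-- Functoriality. -/
def push {Y Z : Type*} (f : Y → Z) : Ch Y →ₗ[ℤ] Ch Z := Finsupp.lmapDomain ℤ ℤ (List.map f)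

@[simp] lemma cone_single {Y : Type*} (v : Y) (l : List Y) (n : ℤ) :
    cone v (Finsupp.single l n) = Finsupp.single (v :: l) n := by
  simp [cone]

@[simp] lemma push_single {Y Z : Type*} (f : Y → Z) (l : List Y) (n : ℤ) :
    push f (Finsupp.single l n) = Finsupp.single (l.map f) n := by
  simp [push]

@[simp] lemma bdry_single {Y : Type*} (l : List Y) :
    bdry (Finsupp.single l 1) = bd l := by
  simp [bdry]

lemma hom_ext {Y A : Type*} [AddCommGroup A] {φ ψ : Ch Y →ₗ[ℤ] A}
    (h : ∀ l, φ (Finsupp.single l 1) = ψ (Finsupp.single l 1)) : φ = ψ := by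
  apply Finsupp.lhom_ext'
  intro l
  ext
  simpa using h l

lemma bdry_cone {Y : Type*} (v : Y) (z : Ch Y) : bdry (cone v z) = z - cone v (bdry z) := by
  have : bdry ∘ₗ cone v = LinearMap.id - cone v ∘ₗ bdry := by
    apply hom_ext
    intro l
    simp [bd]
  exact LinearMap.congr_fun this z

lemma bdry_bd {Y : Type*} (l : List Y) : bdry (bd l) = 0 := by
  induction l with
  | nil => simp [bd]
  | cons v t ih => simp [bd, bdry_cone, ih]

lemma bdry_bdry {Y : Type*} (z : Ch Y) : bdry (bdry z) = 0 := by
  have : (bdry ∘ₗ bdry : Ch Y →ₗ[ℤ] Ch Y) = 0 := by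
    apply hom_ext
    intro l
    simp [bdry_bd]
  exact LinearMap.congr_fun this z

lemma push_cone {Y Z : Type*} (f : Y → Z) (v : Y) (z : Ch Y) :
    push f (cone v z) = cone (f v) (push f z) := by
  have : push f ∘ₗ cone v = cone (f v) ∘ₗ push f := by
    apply hom_ext
    intro l
    simp
  exact LinearMap.congr_fun this z

lemma push_bd {Y Z : Type*} (f : Y → Z) (l : List Y) : push f (bd l) = bd (l.map f) := by
  induction l with
  | nil => simp [bd]
  | cons v t ih => simp [bd, push_cone, ih]

lemma push_bdry {Y Z : Type*} (f : Y → Z) (z : Ch Y) : push f (bdry z) = bdry (push f z) := by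
  have : push f ∘ₗ bdry = bdry ∘ₗ push f := by
    apply hom_ext
    intro l
    simp [push_bd]
  exact LinearMap.congr_fun this z

lemma push_push {X Y Z : Type*} (f : Y → Z) (g : X → Y) (z : Ch X) :
    push f (push g z) = push (f ∘ g) z := by
  have : push f ∘ₗ push g = push (f ∘ g) := by
    apply hom_ext
    intro l
    simp
  exact LinearMap.congr_fun this z

lemma push_id {Y : Type*} (z : Ch Y) : push id z = z := by
  have : push (id : Y → Y) = LinearMap.id := by
    apply hom_ext
    intro l
    simp
  exact LinearMap.congr_fun this z

/-- Chains supported on lists with property `P`. -/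
abbrev On {Y : Type*} (P : List Y → Prop) : Submodule ℤ (Ch Y) := Finsupp.supported ℤ ℤ {l | P l}

lemma single_on {Y : Type*} {P : List Y → Prop} {l : List Y} (h : P l) (n : ℤ) :
    Finsupp.single l n ∈ On P := Finsupp.single_mem_supported ℤ n h

lemma on_map {Y : Type*} {A : Type*} [AddCommGroup A] {P : List Y → Prop} (φ : Ch Y →ₗ[ℤ] A)
    (S : Submodule ℤ A) (h : ∀ l, P l → φ (Finsupp.single l 1) ∈ S) {z : Ch Y} (hz : z ∈ On P) :
    φ z ∈ S := by
  rw [On, Finsupp.supported_eq_span_single] at hz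
  induction hz using Submodule.span_induction with
  | mem x hx =>
    obtain ⟨l, hl, rfl⟩ := hx
    exact h l hl
  | zero => simp
  | add x y _ _ hx hy => rw [map_add]; exact S.add_mem hx hy
  | smul a x _ hx => rw [map_smul]; exact S.smul_mem a hx

lemma on_congr {Y : Type*} {A : Type*} [AddCommGroup A] {P : List Y → Prop}
    (φ ψ : Ch Y →ₗ[ℤ] A)
    (h : ∀ l, P l → φ (Finsupp.single l 1) = ψ (Finsupp.single l 1)) {z : Ch Y} (hz : z ∈ On P) :
    φ z = ψ z := by
  have := on_map (φ - ψ) ⊥ (fun l hl => by simp [h l hl]) hz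
  simpa [sub_eq_zero] using this

lemma on_mono {Y : Type*} {P Q : List Y → Prop} (h : ∀ l, P l → Q l) {z : Ch Y} (hz : z ∈ On P) :
    z ∈ On Q := Finsupp.supported_mono (fun l hl => h l hl) hz

lemma bd_on {Y : Type*} (l : List Y) :
    bd l ∈ On (fun t => t.length + 1 = l.length ∧ ∀ x ∈ t, x ∈ l) := by
  induction l with
  | nil => simp [bd]
  | cons v t ih =>
    rw [bd]
    refine Submodule.sub_mem _ (single_on ⟨by simp, fun x hx => by simp [hx]⟩ _) ?_
    refine on_map (cone v) _ ?_ ih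
    intro s hs
    rw [cone_single]
    refine single_on ⟨by simp [← hs.1], ?_⟩ _
    intro x hx
    rcases List.mem_cons.1 hx with rfl | hx
    · simp
    · simp [hs.2 x hx]

/-! ### Cochains -/

/-- Coboundary. -/
def cob {Y : Type*} (α : List Y → ℤ) : List Y → ℤ := fun l => lin α (bd l)

lemma lin_cob {Y : Type*} (α : List Y → ℤ) (z : Ch Y) : lin (cob α) z = lin α (bdry z) := by
  have : lin (cob α) = lin α ∘ₗ bdry := by
    apply hom_ext
    intro l
    simp [cob]
  exact LinearMap.congr_fun this z

lemma cob_nil {Y : Type*} (α : List Y → ℤ) : cob α [] = 0 := by simp [cob, bd]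

lemma lin_cone {Y : Type*} (α : List Y → ℤ) (v : Y) (z : Ch Y) :
    lin α (cone v z) = lin (fun t => α (v :: t)) z := by
  have : lin α ∘ₗ cone v = lin (fun t => α (v :: t)) := by
    apply hom_ext
    intro l
    simp
  exact LinearMap.congr_fun this z

lemma lin_push {Y Z : Type*} (α : List Z → ℤ) (f : Y → Z) (z : Ch Y) :
    lin α (push f z) = lin (fun t => α (t.map f)) z := by
  have : lin α ∘ₗ push f = lin (fun t => α (t.map f)) := by
    apply hom_ext
    intro l
    simp
  exact LinearMap.congr_fun this z

lemma cob_cons {Y : Type*} (α : List Y → ℤ) (v : Y) (t : List Y) :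
    cob α (v :: t) = α t - cob (fun s => α (v :: s)) t := by
  simp only [cob, bd, map_sub, lin_cone]
  simp

lemma cob_cob {Y : Type*} (α : List Y → ℤ) (l : List Y) : cob (cob α) l = 0 := by
  change lin (cob α) (bd l) = 0
  rw [lin_cob, bdry_bd, map_zero]

/-- Alternating cochains. -/
def Alt {Y : Type*} (α : List Y → ℤ) : Prop :=
  ∀ l t v w, α (l ++ v :: w :: t) = - α (l ++ w :: v :: t) ∧ α (l ++ v :: v :: t) = 0

lemma Alt.cons {Y : Type*} {α : List Y → ℤ} (h : Alt α) (u : Y) : Alt (fun s => α (u :: s)) :=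
  fun l t v w => h (u :: l) t v w

lemma Alt.cob {Y : Type*} {α : List Y → ℤ} (h : Alt α) : Alt (cob α) := by
  intro l
  induction l generalizing α with
  | nil =>
    intro t v w
    have e : (fun s => α (v :: w :: s)) = fun s => - α (w :: v :: s) := by
      funext s
      exact (h [] s v w).1
    have e2 : (fun s => α (v :: v :: s)) = fun s => 0 := by
      funext s
      exact (h [] s v v).2
    have e3 : FreeR3.cob (fun s => - α (w :: v :: s)) t = - FreeR3.cob (fun s => α (w :: v :: s)) t := by
      have : (lin (fun s => - α (w :: v :: s))) = - lin (fun s => α (w :: v :: s)) := by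
        apply hom_ext; intro l; simp
      simp [FreeR3.cob, this]
    have e4 : FreeR3.cob (fun _ : List Y => (0 : ℤ)) t = 0 := by
      have : (lin (fun _ : List Y => (0 : ℤ))) = 0 := by
        apply hom_ext; intro l; simp
      simp [FreeR3.cob, this]
    constructor
    · simp only [List.nil_append, cob_cons, e, e3]
      ring
    · simp only [List.nil_append, cob_cons, e2, e4]
      ring
  | cons u l ih =>
    intro t v w
    have h1 := ih (h.cons u) t v w
    have h2 := h l t v w
    constructor
    · simp only [List.cons_append, cob_cons, h1.1, h2.1]
      ring
    · simp only [List.cons_append, cob_cons, h1.2, h2.2]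
      ring

lemma Alt.perm {Y : Type*} {α : List Y → ℤ} (h : Alt α) {l l' : List Y} (p : l.Perm l') :
    α l = 0 ↔ α l' = 0 := by
  induction p generalizing α with
  | nil => rfl
  | cons x _ ih => exact ih (h.cons x)
  | swap x y l =>
    have := (h [] l y x).1
    simp only [List.nil_append] at this
    rw [this, neg_eq_zero]
  | trans _ _ ih1 ih2 => exact (ih1 h).trans (ih2 h)

lemma Alt.dup {Y : Type*} {α : List Y → ℤ} (h : Alt α) {l : List Y} (hl : ¬ l.Nodup) :
    α l = 0 := by
  classical
  rw [← List.exists_duplicate_iff_not_nodup] at hl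
  obtain ⟨x, hx⟩ := hl
  rw [List.duplicate_iff_sublist] at hx
  obtain ⟨t, ht⟩ := hx.exists_perm_append
  rw [h.perm ht]
  exact (h [] t x x).2

lemma Alt.long {Y : Type*} [Fintype Y] {α : List Y → ℤ} (h : Alt α) {l : List Y}
    (hl : Fintype.card Y < l.length) : α l = 0 := by
  apply h.dup
  intro hn
  exact absurd hn.length_le_card (by omega)

lemma Alt.map {Y Z : Type*} {α : List Z → ℤ} (h : Alt α) (f : Y → Z) :
    Alt (fun l => α (l.map f)) := by
  intro l t v w
  simpa using h (l.map f) (t.map f) (f v) (f w)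

lemma Alt.sum {Y ι : Type*} {α : ι → List Y → ℤ} (s : Finset ι) (h : ∀ i, Alt (α i)) :
    Alt (fun l => ∑ i ∈ s, α i l) := by
  intro l t v w
  constructor
  · rw [← Finset.sum_neg_distrib]
    exact Finset.sum_congr rfl fun i _ => (h i l t v w).1
  · exact Finset.sum_eq_zero fun i _ => (h i l t v w).2

/-- gluing alternating cochains along a function of the underlying set -/
lemma Alt.glue {Y ι : Type*} {α : ι → List Y → ℤ} (h : ∀ i, Alt (α i)) (r : Set Y → ι) :
    Alt (fun l => α (r {x | x ∈ l}) l) := by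
  intro l t v w
  have e : {x | x ∈ l ++ v :: w :: t} = {x | x ∈ l ++ w :: v :: t} := by
    ext x
    simp only [List.mem_append, List.mem_cons, Set.mem_ofPred_eq]
    tauto
  constructor
  · simp only [e]
    exact (h _ l t v w).1
  · exact (h _ l t v v).2

/-! ### Group actions -/

section Group

set_option linter.unusedSectionVars false

variable {G : Type*} [Group G] {V : Type*} [MulAction G V]

lemma exists_equivariant {Ω : Type*} [MulAction G Ω] :
    ∃ ρ : Ω → G, ∀ ω : Ω, (∀ g : G, g • ω = ω → g = 1) → ∀ g : G, ρ (g • ω) = g * ρ ω := by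
  classical
  let rep : Ω → Ω := fun ω => Quotient.out (Quotient.mk (MulAction.orbitRel G Ω) ω)
  have hrep : ∀ ω, ∃ k : G, k • rep ω = ω := by
    intro ω
    have h := Quotient.mk_out (s := MulAction.orbitRel G Ω) ω
    have h2 : ω ∈ MulAction.orbit G (rep ω) := by
      have h3 : rep ω ∈ MulAction.orbit G ω := MulAction.orbitRel_apply.1 h
      exact MulAction.mem_orbit_symm.1 h3
    exact h2
  choose ρ hρ using hrep
  refine ⟨ρ, fun ω hfree g => ?_⟩
  have e : rep (g • ω) = rep ω := by
    have : Quotient.mk (MulAction.orbitRel G Ω) (g • ω) = Quotient.mk (MulAction.orbitRel G Ω) ω :=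
      Quotient.sound (MulAction.orbitRel_apply.2 (MulAction.mem_orbit ω g))
    simp only [rep, this]
  have h1 := hρ (g • ω)
  rw [e] at h1
  have h2 : rep ω = (ρ ω)⁻¹ • ω := by
    rw [eq_inv_smul_iff]; exact hρ ω
  rw [h2, smul_smul] at h1
  have h3 : (g⁻¹ * (ρ (g • ω) * (ρ ω)⁻¹)) • ω = ω := by
    rw [mul_smul, h1, inv_smul_smul]
  have h4 := hfree _ h3
  rw [inv_mul_eq_one] at h4
  exact eq_mul_of_mul_inv_eq h4.symm

/-- Lists that do not contain two different points of one orbit, nor a point with stabilizer. -/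
def Allowed (G : Type*) [Group G] {V : Type*} [MulAction G V] (l : List V) : Prop :=
  ∀ v ∈ l, ∀ w ∈ l, ∀ g : G, w = g • v → g = 1

/-- The action on lists. -/
def mv (g : G) (l : List V) : List V := l.map (g • ·)

lemma mv_mv (g h : G) (l : List V) : mv g (mv h l) = mv (g * h) l := by
  simp [mv, mul_smul]

lemma mv_one (l : List V) : mv (1 : G) l = l := by
  simp [mv]

lemma mem_mv {g : G} {l : List V} {x : V} : x ∈ mv g l ↔ g⁻¹ • x ∈ l := by
  simp only [mv, List.mem_map]
  constructor
  · rintro ⟨y, hy, rfl⟩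
    simpa using hy
  · intro h
    exact ⟨_, h, by simp⟩

lemma set_mv (g : G) (l : List V) : {x | x ∈ mv g l} = g • {x | x ∈ l} := by
  ext x
  rw [Set.mem_smul_set_iff_inv_smul_mem]
  exact mem_mv

variable [Fintype G] (γ : G) (hγ : ∀ g : G, g ∈ Subgroup.zpowers γ)

include hγ in
lemma gen_comm (g : G) : g * γ = γ * g := by
  obtain ⟨n, rfl⟩ := hγ g
  exact ((Commute.refl γ).zpow_left n).eq

lemma Allowed.mv {l : List V} (h : Allowed G l) {g : G} (hg : ∀ k : G, k * g = g * k) :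
    Allowed G (mv g l) := by
  intro v hv w hw k e
  refine h _ (mem_mv.1 hv) _ (mem_mv.1 hw) k ?_
  subst e
  rw [smul_smul, smul_smul]
  congr 1
  rw [inv_mul_eq_iff_eq_mul, ← mul_assoc, ← hg]
  group

include hγ in
lemma all_comm (g h : G) : g * h = h * g := by
  obtain ⟨n, rfl⟩ := hγ g
  obtain ⟨m, rfl⟩ := hγ h
  exact (((Commute.refl γ).zpow_left n).zpow_right m).eq

lemma Allowed.free {l : List V} (h : Allowed G l) (hne : l ≠ []) (g : G)
    (e : g • {x | x ∈ l} = {x | x ∈ l}) : g = 1 := by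
  obtain ⟨v, t, rfl⟩ := List.exists_cons_of_ne_nil hne
  have : g • v ∈ {x | x ∈ v :: t} := by
    rw [← e]
    exact Set.smul_mem_smul_set (by simp)
  exact h v (by simp) (g • v) this g rfl

include hγ in
lemma descent_one {α : List V → ℤ} (hα : Alt α) (h0 : α [] = 0)
    (hinv : ∀ l, Allowed G l → α (mv γ l) = α l) :
    ∃ β : List V → ℤ, Alt β ∧ ∀ l, Allowed G l → ∑ h : G, β (mv h l) = α l := by
  classical
  obtain ⟨ρ, hρ⟩ := exists_equivariant (G := G) (Ω := Set V)
  have hinv2 : ∀ g : G, ∀ l, Allowed G l → α (mv g l) = α l := by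
    intro g
    have hg : g ∈ Submonoid.powers γ := by
      rw [mem_powers_iff_mem_zpowers]; exact hγ g
    obtain ⟨n, rfl⟩ := hg
    induction n with
    | zero => intro l _; simp [mv_one]
    | succ n ih =>
      intro l hl
      have := ih (mv γ l) (hl.mv (gen_comm γ hγ))
      rw [mv_mv, hinv l hl] at this
      simpa [pow_succ] using this
  let A : G → List V → ℤ := fun g l => if g = 1 then α l else 0
  have hA : ∀ g, Alt (A g) := by
    intro g l t v w
    by_cases h : g = 1
    · simpa [A, h] using hα l t v w
    · simp [A, h]
  refine ⟨fun l => A (ρ {x | x ∈ l}) l, Alt.glue hA ρ, ?_⟩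
  intro l hl
  by_cases hne : l = []
  · subst hne
    simp [A, mv, h0]
  · have e : ∀ h : G, ρ {x | x ∈ mv h l} = h * ρ {x | x ∈ l} := by
      intro h
      rw [set_mv]
      exact hρ _ (hl.free hne) h
    simp only [e, A, mul_eq_one_iff_eq_inv]
    rw [Finset.sum_ite_eq' Finset.univ]
    simp [hinv2 _ l hl]

include hγ in
lemma descent_two {α : List V → ℤ} (hα : Alt α) (h0 : α [] = 0)
    (hinv : ∀ l, Allowed G l → ∑ h : G, α (mv h l) = 0) :
    ∃ β : List V → ℤ, Alt β ∧ ∀ l, Allowed G l → β (mv γ l) - β l = α l := by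
  classical
  obtain ⟨ρ, hρ⟩ := exists_equivariant (G := G) (Ω := Set V)
  have hk : ∀ g : G, ∃ n < orderOf γ, γ ^ n = g := by
    intro g
    have := hγ g
    rw [mem_zpowers_iff_mem_range_orderOf] at this
    simpa using this
  choose κ hκ hκ2 using hk
  let A : G → List V → ℤ := fun g l => ∑ j ∈ Finset.range (κ g), α (mv (γ ^ j * g⁻¹) l)
  have hA : ∀ g, Alt (A g) := fun g => Alt.sum _ fun j => hα.map _
  refine ⟨fun l => A (ρ {x | x ∈ l}) l, Alt.glue hA ρ, ?_⟩
  intro l hl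
  by_cases hne : l = []
  · subst hne
    simp [A, mv, h0]
  · have e : ρ {x | x ∈ mv γ l} = γ * ρ {x | x ∈ l} := by
      rw [set_mv]
      exact hρ _ (hl.free hne) γ
    set r := ρ {x | x ∈ l}
    simp only [e, A, mv_mv]
    have e2 : ∀ j : ℕ, γ ^ j * (γ * r)⁻¹ * γ = γ ^ j * r⁻¹ := by
      intro j
      rw [mul_inv_rev]
      group
    simp only [e2]
    have hS : ∑ j ∈ Finset.range (orderOf γ), α (mv (γ ^ j * r⁻¹) l) = 0 := by
      rw [← hinv (mv r⁻¹ l) (hl.mv (fun k => all_comm γ hγ _ _))]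
      simp only [mv_mv]
      refine Finset.sum_bij (fun j _ => γ ^ j) (by simp) ?_ ?_ (by simp)
      · intro a ha b hb hab
        exact pow_injOn_Iio_orderOf (by simpa using ha) (by simpa using hb) hab
      · intro b _
        exact ⟨κ b, by simpa using hκ b, hκ2 b⟩
    have hlast : ∑ j ∈ Finset.range (κ r + 1), α (mv (γ ^ j * r⁻¹) l)
        - ∑ j ∈ Finset.range (κ r), α (mv (γ ^ j * r⁻¹) l) = α l := by
      rw [Finset.sum_range_succ, hκ2 r]
      simp [mv_one]
    have hkk : γ ^ κ (γ * r) = γ ^ (κ r + 1) := by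
      rw [hκ2, pow_succ', hκ2]
    rcases Nat.lt_or_ge (κ r + 1) (orderOf γ) with h | h
    · have : κ (γ * r) = κ r + 1 := pow_injOn_Iio_orderOf (hκ _) h hkk
      rw [this]; exact hlast
    · have h' : κ r + 1 = orderOf γ := le_antisymm (hκ r) h
      have : κ (γ * r) = 0 := by
        apply pow_injOn_Iio_orderOf (hκ _) (orderOf_pos γ)
        change γ ^ κ (γ * r) = γ ^ 0
        rw [hkk, h', pow_orderOf_eq_one, pow_zero]
      rw [h', hS] at hlast
      rw [this]
      simpa using hlast

lemma cob_mv (α : List V → ℤ) (g : G) (l : List V) :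
    cob (fun t => α (mv g t)) l = cob α (mv g l) := by
  simp only [cob, mv]
  rw [← push_bd, lin_push]

lemma cob_congr {α β : List V → ℤ} (h : ∀ l, Allowed G l → α l = β l) (l : List V)
    (hl : Allowed G l) : cob α l = cob β l := by
  refine on_congr _ _ ?_ (bd_on l)
  intro t ht
  simp only [Finsupp.linearCombination_single, one_smul]
  exact h t fun v hv w hw => hl v (ht.2 v hv) w (ht.2 w hw)

lemma lin_sum {Y ι : Type*} (s : Finset ι) (α : ι → List Y → ℤ) (z : Ch Y) :
    lin (fun l => ∑ i ∈ s, α i l) z = ∑ i ∈ s, lin (α i) z := by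
  have : lin (fun l => ∑ i ∈ s, α i l) = ∑ i ∈ s, lin (α i) := by
    apply hom_ext
    intro l
    simp
  rw [this]; simp

lemma lin_sub {Y : Type*} (α β : List Y → ℤ) (z : Ch Y) :
    lin (fun l => α l - β l) z = lin α z - lin β z := by
  have : lin (fun l => α l - β l) = lin α - lin β := by
    apply hom_ext
    intro l
    simp
  rw [this]; simp

lemma push_on {l : Ch V} {n : ℕ} (hcomm : ∀ g h : G, g * h = h * g)
    (h : l ∈ On (fun t => Allowed G t ∧ t.length = n)) (g : G) :
    push (g • · : V → V) l ∈ On (fun t => Allowed G t ∧ t.length = n) := by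
  refine on_map _ _ ?_ h
  intro t ht
  rw [push_single]
  exact single_on ⟨ht.1.mv (fun k => hcomm k g), by simpa using ht.2⟩ _

include hγ in
/-- The algebraic heart: there is no long tower of chains in a finite `V`. -/
theorem no_tower [Fintype V] (K : ℕ) (hK : Fintype.card V < 2 * K + 1)
    (hG : 1 < Fintype.card G) (c : ℕ → Ch V)
    (hc : ∀ n ≤ 2 * K, c n ∈ On (fun t => Allowed G t ∧ t.length = n + 1))
    (hc0 : bdry (c 0) = Finsupp.single [] 1)
    (hodd : ∀ k < K, bdry (c (2 * k + 1)) = push (γ • · : V → V) (c (2 * k)) - c (2 * k))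
    (heven : ∀ k < K, bdry (c (2 * k + 2)) = ∑ h : G, push (h • · : V → V) (c (2 * k + 1))) :
    False := by
  classical
  have hcomm := all_comm γ hγ
  have key : ∀ k ≤ K, ∃ β : List V → ℤ, Alt β ∧
      (∀ l, Allowed G l → ∑ h : G, cob β (mv h l) = 0) ∧
      ∃ m : ℤ, ∑ h : G, lin β (push (h • · : V → V) (c (2 * k))) = 1 + Fintype.card G * m := by
    intro k
    induction k with
    | zero =>
      intro _
      let e : List V → ℤ := fun l => if l = [] then 1 else 0
      have he : Alt e := by
        intro l t v w
        simp [e]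
      obtain ⟨β, hβ, hβ2⟩ := descent_one γ hγ (α := cob e) he.cob (cob_nil _) (by
        intro l _
        rw [← cob_mv]
        congr 1
        funext t
        simp [e, mv])
      refine ⟨β, hβ, ?_, 0, ?_⟩
      · intro l hl
        have h1 : ∀ l, Allowed G l → cob (fun l => ∑ h : G, β (mv h l)) l = 0 := by
          intro l hl
          rw [cob_congr hβ2 l hl, cob_cob]
        rw [← h1 l hl]
        simp only [cob]
        rw [lin_sum]
        refine Finset.sum_congr rfl fun h _ => ?_
        exact (cob_mv β h l).symm
      · have h1 : lin (fun l => ∑ h : G, β (mv h l)) (c 0) = lin (cob e) (c 0) := by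
          refine on_congr _ _ ?_ (hc 0 (by omega))
          intro l hl
          simpa using hβ2 l hl.1
        rw [lin_sum, lin_cob, hc0] at h1
        simp only [lin_push]
        simpa [e, mv] using h1
    | succ k ih =>
      intro hk
      obtain ⟨β, hβ, hβ2, m, hm⟩ := ih (by omega)
      obtain ⟨β', hβ', hβ'2⟩ := descent_two γ hγ hβ.cob (cob_nil _) hβ2
      obtain ⟨β'', hβ'', hβ''2⟩ := descent_one γ hγ hβ'.cob (cob_nil _) (by
        intro l hl
        have h1 : cob (fun l => β' (mv γ l) - β' l) l = 0 := by
          rw [cob_congr hβ'2 l hl, cob_cob]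
        have h2 : cob (fun l => β' (mv γ l) - β' l) l = cob β' (mv γ l) - cob β' l := by
          rw [← cob_mv]
          exact lin_sub _ _ _
        omega)
      refine ⟨β'', hβ'', ?_, ?_⟩
      · intro l hl
        have h1 : cob (fun l => ∑ h : G, β'' (mv h l)) l = 0 := by
          rw [cob_congr hβ''2 l hl, cob_cob]
        rw [← h1]
        simp only [cob]
        rw [lin_sum]
        refine Finset.sum_congr rfl fun h _ => ?_
        exact (cob_mv β'' h l).symm
      · -- compare the sums
        have s2 : ∑ h : G, lin β'' (push (h • · : V → V) (c (2 * (k + 1))))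
            = ∑ h : G, lin β' (push (h • · : V → V) (c (2 * k + 1))) := by
          have h1 : lin (fun l => ∑ h : G, β'' (mv h l)) (c (2 * (k + 1)))
              = lin (cob β') (c (2 * (k + 1))) := by
            refine on_congr _ _ ?_ (hc _ (by omega))
            intro l hl
            simpa using hβ''2 l hl.1
          rw [lin_sum, lin_cob, show 2 * (k + 1) = 2 * k + 2 by ring, heven k (by omega),
            map_sum] at h1
          rw [← h1]
          simp only [lin_push]
          rfl
        rw [s2]
        let φ : G → ℤ := fun h => lin β (push (h • · : V → V) (c (2 * k)))
        let φ' : G → ℤ := fun h => lin β' (push (h • · : V → V) (c (2 * k + 1)))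
        have pp : ∀ (h : G) (z : Ch V), push (h • · : V → V) (push (γ • · : V → V) z)
            = push ((γ * h) • · : V → V) z := by
          intro h z
          rw [push_push]
          congr 2
          funext x
          simp [smul_smul, gen_comm γ hγ]
        have pp' : ∀ (h : G) (z : Ch V), push (γ • · : V → V) (push (h • · : V → V) z)
            = push ((γ * h) • · : V → V) z := by
          intro h z
          rw [push_push]
          congr 2
          funext x
          simp [smul_smul]
        have hφ : ∀ h, φ (γ * h) - φ h = φ' (γ * h) - φ' h := by
          intro h
          have h1 : lin (fun l => β' (mv γ l) - β' l) (push (h • · : V → V) (c (2 * k + 1)))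
              = lin (cob β) (push (h • · : V → V) (c (2 * k + 1))) := by
            refine on_congr _ _ ?_ (push_on hcomm (hc (2 * k + 1) (by omega)) h)
            intro l hl
            simpa using hβ'2 l hl.1
          rw [lin_sub, lin_cob, ← push_bdry, hodd k (by omega), map_sub, map_sub, pp] at h1
          have h2 : lin (fun l => β' (mv γ l)) (push (h • · : V → V) (c (2 * k + 1)))
              = φ' (γ * h) := by
            simp only [φ']
            rw [← pp', lin_push β']
            rfl
          rw [h2] at h1
          exact h1.symm
        have hconst : ∀ h, φ' h - φ h = φ' 1 - φ 1 := by
          intro g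
          have hg : g ∈ Submonoid.powers γ := by
            rw [mem_powers_iff_mem_zpowers]; exact hγ g
          obtain ⟨n, rfl⟩ := hg
          induction n with
          | zero => simp
          | succ n ih =>
            have := hφ (γ ^ n)
            simp only at ih ⊢
            rw [pow_succ']
            linarith
        refine ⟨m + (φ' 1 - φ 1), ?_⟩
        have : ∑ h, φ' h = ∑ h, φ h + ∑ h : G, (φ' 1 - φ 1) := by
          rw [← Finset.sum_add_distrib]
          refine Finset.sum_congr rfl fun h _ => ?_
          rw [← hconst h]; ring
        change ∑ h, φ' h = _
        change ∑ h, φ h = _ at hm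
        rw [this, hm]
        simp
        ring
  obtain ⟨β, hβ, -, m, hm⟩ := key K le_rfl
  have hz : ∑ h : G, lin β (push (h • · : V → V) (c (2 * K))) = 0 := by
    refine Finset.sum_eq_zero fun h _ => ?_
    have := on_congr (lin β) 0 (P := fun t => Allowed G t ∧ t.length = 2 * K + 1) ?_
      (push_on hcomm (hc (2 * K) le_rfl) h)
    · simpa using this
    · intro l hl
      simpa using hβ.long (by omega : Fintype.card V < l.length)
  rw [hz] at hm
  have hd : (Fintype.card G : ℤ) ∣ 1 := ⟨-m, by linarith⟩
  have := Int.eq_one_of_dvd_one (by positivity) hd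
  omega

end Group

/-! ### Barycentric subdivision -/

section Subdivision

variable {E F : Type*} [NormedAddCommGroup E] [NormedSpace ℝ E]
  [NormedAddCommGroup F] [NormedSpace ℝ F]

/-- Barycentre of a list. -/
def bary (l : List E) : E := (l.length : ℝ)⁻¹ • l.sum

/-- Subdivision of a list of length `n`. -/
def sdN : ℕ → List E → Ch E
  | 0, _ => Finsupp.single [] 1
  | n + 1, l => cone (bary l) (lin (sdN n) (bd l))

/-- Barycentric subdivision. -/
def sd : Ch E →ₗ[ℤ] Ch E := lin (fun l => sdN l.length l)

lemma sd_single_nil : sd (Finsupp.single ([] : List E) 1) = Finsupp.single [] 1 := by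
  simp [sd, sdN]

lemma sd_single (l : List E) (hl : l ≠ []) :
    sd (Finsupp.single l 1) = cone (bary l) (sd (bd l)) := by
  obtain ⟨v, t, rfl⟩ := List.exists_cons_of_ne_nil hl
  have : lin (sdN t.length) (bd (v :: t)) = sd (bd (v :: t)) := by
    refine on_congr _ _ ?_ (bd_on (v :: t))
    intro s hs
    have hs' : s.length = t.length := by simpa using hs.1
    simp [sd, hs']
  rw [← this]
  simp [sd, sdN]

lemma sd_bd (l : List E) : sd (bd l) = bdry (sd (Finsupp.single l 1)) := by
  induction hn : l.length using Nat.strong_induction_on generalizing l with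
  | _ n ih =>
    by_cases hl : l = []
    · subst hl
      simp [sd_single_nil, bd]
    · rw [sd_single l hl, bdry_cone]
      have : bdry (sd (bd l)) = sd (bdry (bd l)) := by
        have h0 := on_congr (P := fun t => t.length + 1 = l.length ∧ ∀ x ∈ t, x ∈ l)
          ((bdry : Ch E →ₗ[ℤ] Ch E).comp (sd : Ch E →ₗ[ℤ] Ch E))
          ((sd : Ch E →ₗ[ℤ] Ch E).comp (bdry : Ch E →ₗ[ℤ] Ch E)) (fun t ht => by
            rw [LinearMap.comp_apply, LinearMap.comp_apply, bdry_single]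
            exact (ih t.length (by omega) t rfl).symm) (bd_on l)
        rw [LinearMap.comp_apply, LinearMap.comp_apply] at h0
        exact h0
      rw [this, bdry_bd]
      simp

lemma sd_bdry (z : Ch E) : sd (bdry z) = bdry (sd z) := by
  have : (sd ∘ₗ bdry : Ch E →ₗ[ℤ] Ch E) = bdry ∘ₗ sd := by
    apply hom_ext
    intro l
    simp [sd_bd]
  exact LinearMap.congr_fun this z

lemma bary_map (A : E →ₗ[ℝ] F) (l : List E) : bary (l.map A) = A (bary l) := by
  simp [bary, map_list_sum]

lemma sd_push_single (A : E →ₗ[ℝ] F) (l : List E) :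
    sd (Finsupp.single (l.map A) 1) = push A (sd (Finsupp.single l 1)) := by
  induction hn : l.length using Nat.strong_induction_on generalizing l with
  | _ n ih =>
    by_cases hl : l = []
    · subst hl
      simp [sd_single_nil]
    · rw [sd_single l hl, sd_single _ (by simpa using hl), push_cone, bary_map, ← push_bd]
      congr 1
      refine on_congr (sd ∘ₗ push A) (push A ∘ₗ sd) ?_ (bd_on l)
      intro t ht
      simp only [LinearMap.comp_apply, push_single]
      exact ih t.length (by omega) t rfl

lemma sd_push (A : E →ₗ[ℝ] F) (z : Ch E) : sd (push A z) = push A (sd z) := by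
  have : sd ∘ₗ push A = push A ∘ₗ sd := by
    apply hom_ext
    intro l
    simp [sd_push_single]
  exact LinearMap.congr_fun this z

/-- Lists of length `n` with points in `S` and mutual distances at most `d`. -/
def Small (d : ℝ) (S : Set E) (n : ℕ) (l : List E) : Prop :=
  l.length = n ∧ (∀ x ∈ l, x ∈ S) ∧ ∀ x ∈ l, ∀ y ∈ l, dist x y ≤ d

lemma bary_mem {S : Set E} (hS : Convex ℝ S) {l : List E} (hl : l ≠ []) (h : ∀ x ∈ l, x ∈ S) :
    bary l ∈ S := by
  have hpos : (0 : ℝ) < l.length := by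
    have := List.length_pos_iff.2 hl
    exact_mod_cast this
  have : bary l = ∑ i : Fin l.length, (l.length : ℝ)⁻¹ • l[i] := by
    rw [← Finset.smul_sum, bary]
    congr 1
    simp
  rw [this]
  refine hS.sum_mem (fun _ _ => by positivity) ?_ ?_
  · simp [hpos.ne']
  · intro i _
    exact h _ (List.getElem_mem _)

lemma dist_bary {d : ℝ} {l : List E} {L : ℕ} (hL : l.length ≤ L) {x : E} (hx : x ∈ l)
    (h : ∀ y ∈ l, dist x y ≤ d) : dist x (bary l) ≤ (1 - (L : ℝ)⁻¹) * d := by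
  have hd : 0 ≤ d := dist_nonneg.trans (h x hx)
  have hp : 0 < l.length := List.length_pos_of_mem hx
  have hpos : (0 : ℝ) < l.length := by exact_mod_cast hp
  obtain ⟨s, t, rfl⟩ := List.append_of_mem hx
  set m := (s ++ x :: t).length with hm
  have key : ∀ r : List E, (∀ y ∈ r, dist x y ≤ d) →
      ‖(r.length : ℝ) • x - r.sum‖ ≤ r.length * d := by
    intro r
    induction r with
    | nil => simp
    | cons a r ih =>
      intro hr
      have h1 := ih fun y hy => hr y (by simp [hy])
      have h2 := hr a (by simp)
      have e : (((a :: r).length : ℕ) : ℝ) • x - (a :: r).sum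
          = (x - a) + ((r.length : ℝ) • x - r.sum) := by
        simp only [List.length_cons, List.sum_cons]
        push_cast
        module
      rw [e]
      refine (norm_add_le _ _).trans ?_
      rw [dist_eq_norm] at h2
      simp only [List.length_cons]
      push_cast
      linarith
  have h1 := key (s ++ t) fun y hy => h y (by
    simp only [List.mem_append, List.mem_cons] at hy ⊢; tauto)
  have hm' : (m : ℝ) = (s ++ t).length + 1 := by
    rw [hm]; simp; ring
  have e : x - bary (s ++ x :: t) = (m : ℝ)⁻¹ • (((s ++ t).length : ℝ) • x - (s ++ t).sum) := by
    rw [bary, ← hm, eq_inv_smul_iff₀ hpos.ne', smul_sub, smul_inv_smul₀ hpos.ne', hm']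
    simp only [List.sum_append, List.sum_cons]
    module
  rw [dist_eq_norm, e, norm_smul, norm_inv, Real.norm_of_nonneg hpos.le]
  have hLm : (m : ℝ) ≤ L := by exact_mod_cast hL
  have hinv : (L : ℝ)⁻¹ ≤ (m : ℝ)⁻¹ := inv_anti₀ hpos hLm
  calc (m : ℝ)⁻¹ * ‖((s ++ t).length : ℝ) • x - (s ++ t).sum‖
      ≤ (m : ℝ)⁻¹ * ((s ++ t).length * d) := by gcongr
    _ = (1 - (m : ℝ)⁻¹) * d := by
      have : ((s ++ t).length : ℝ) = m - 1 := by linarith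
      rw [this]
      field_simp
    _ ≤ _ := by gcongr

lemma sd_small {L : ℕ} {d : ℝ} (n : ℕ) (hn : n ≤ L) (S : Set E) (hS : Convex ℝ S) (l : List E)
    (h : Small d S n l) : sd (Finsupp.single l 1) ∈ On (Small ((1 - (L : ℝ)⁻¹) * d) S n) := by
  induction n generalizing l S with
  | zero =>
    have : l = [] := List.length_eq_zero_iff.1 h.1
    subst this
    rw [sd_single_nil]
    exact single_on ⟨rfl, by simp, by simp⟩ _
  | succ n ih =>
    have hl : l ≠ [] := by
      rintro rfl
      have := h.1
      simp at this
    rw [sd_single l hl]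
    set r := (1 - (L : ℝ)⁻¹) * d
    let S' := S ∩ Metric.closedBall (bary l) r
    have hS' : Convex ℝ S' := hS.inter (convex_closedBall _ _)
    have hr : ∀ x ∈ l, dist x (bary l) ≤ r := fun x hx =>
      dist_bary (by rw [h.1]; exact hn) hx (h.2.2 x hx)
    have hmem : ∀ x ∈ l, x ∈ S' := fun x hx => ⟨h.2.1 x hx, hr x hx⟩
    have h1 : sd (bd l) ∈ On (Small r S' n) := by
      refine on_map sd _ ?_ (bd_on l)
      intro t ht
      refine ih (by omega) S' hS' t ⟨?_, ?_, ?_⟩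
      · have := h.1; omega
      · exact fun x hx => hmem x (ht.2 x hx)
      · exact fun x hx y hy => h.2.2 x (ht.2 x hx) y (ht.2 y hy)
    have hr0 : 0 ≤ r := by
      obtain ⟨v, t, rfl⟩ := List.exists_cons_of_ne_nil hl
      exact dist_nonneg.trans (hr v (by simp))
    refine on_map (cone (bary l)) _ ?_ h1
    intro t ht
    rw [cone_single]
    refine single_on ⟨by simp [ht.1], ?_, ?_⟩ _
    · intro x hx
      rcases List.mem_cons.1 hx with rfl | hx
      · exact bary_mem hS hl h.2.1
      · exact (ht.2.1 x hx).1
    · intro x hx y hy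
      rcases List.mem_cons.1 hx with rfl | hx <;> rcases List.mem_cons.1 hy with rfl | hy
      · simpa using hr0
      · rw [dist_comm]; exact (ht.2.1 y hy).2
      · exact (ht.2.1 x hx).2
      · exact ht.2.2 x hx y hy

end Subdivision

/-! ### The closed cover of Euclidean space -/

section Cover

universe u

/-- Euclidean 3-space. -/
abbrev X3 := EuclideanSpace ℝ (Fin 3)

variable {G : Type*} [Group G] [Fintype G] [MulAction G X3]

open Classical in
/-- positive iff on the `j`-th coordinate of the orbit map the values on `S` dominate the others -/
def gap (v : Fin 3 × Finset G) (x : X3) : ℝ :=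
  if v.2.Nonempty ∧ v.2 ≠ Finset.univ then
    ∏ h ∈ v.2, ∏ k ∈ v.2ᶜ, max 0 ((h⁻¹ • x) v.1 - (k⁻¹ • x) v.1) else 0

lemma gap_continuous (hcont : ∀ g : G, Continuous fun x : X3 => g • x) (v : Fin 3 × Finset G) :
    Continuous (gap v) := by
  unfold gap
  split_ifs
  · refine continuous_finsetProd _ fun h _ => continuous_finsetProd _ fun k _ => ?_
    have h1 : ∀ g : G, Continuous fun x : X3 => (g • x) v.1 := fun g =>
      (EuclideanSpace.proj (𝕜 := ℝ) v.1).continuous.comp (hcont g)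
    exact continuous_const.max ((h1 _).sub (h1 _))
  · exact continuous_const

open Classical in
lemma gap_smul (g : G) (v : Fin 3 × Finset G) (x : X3) :
    gap (v.1, g • v.2) (g • x) = gap v x := by
  unfold gap
  have h1 : (g • v.2).Nonempty ↔ v.2.Nonempty := by simp
  have h2 : g • v.2 = Finset.univ ↔ v.2 = Finset.univ := by
    rw [← Finset.card_eq_iff_eq_univ, ← Finset.card_eq_iff_eq_univ, Finset.card_smul_finset]
  simp only [h1, ne_eq, h2]
  split_ifs
  · symm
    refine Finset.prod_bij (fun h _ => g * h) ?_ ?_ ?_ ?_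
    · intro h hh
      exact Finset.smul_mem_smul_finset hh
    · intro a _ b _ hab
      exact mul_left_cancel hab
    · intro b hb
      obtain ⟨a, ha, rfl⟩ := Finset.mem_smul_finset.1 hb
      exact ⟨a, ha, rfl⟩
    · intro h hh
      refine Finset.prod_bij (fun k _ => g * k) ?_ ?_ ?_ ?_
      · intro k hk
        rw [Finset.mem_compl] at hk ⊢
        intro hk2
        apply hk
        obtain ⟨a, ha, hak⟩ := Finset.mem_smul_finset.1 hk2
        have : a = k := mul_left_cancel hak
        rwa [← this]
      · intro a _ b _ hab
        exact mul_left_cancel hab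
      · intro b hb
        refine ⟨g⁻¹ * b, ?_, by simp⟩
        rw [Finset.mem_compl] at hb ⊢
        intro h3
        apply hb
        exact Finset.mem_smul_finset.2 ⟨_, h3, by simp⟩
      · intro k hk
        simp [smul_smul, mul_assoc]
  · rfl

lemma gap_pos {v : Fin 3 × Finset G} {x : X3} (h : 0 < gap v x) :
    v.2.Nonempty ∧ v.2 ≠ Finset.univ ∧
      ∀ a ∈ v.2, ∀ b, b ∉ v.2 → (b⁻¹ • x) v.1 < (a⁻¹ • x) v.1 := by
  classical
  unfold gap at h
  split_ifs at h with hS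
  · refine ⟨hS.1, hS.2, fun a ha b hb => ?_⟩
    by_contra hcon
    push Not at hcon
    apply h.ne'
    refine Finset.prod_eq_zero ha (Finset.prod_eq_zero (Finset.mem_compl.2 hb) ?_)
    rw [max_eq_left]
    linarith
  · exact absurd h (lt_irrefl _)

lemma exists_gap_pos (hfree : ∀ (g : G) (x : X3), g • x = x → g = 1)
    (hG : 1 < Fintype.card G) (x : X3) : ∃ v : Fin 3 × Finset G, 0 < gap v x := by
  classical
  obtain ⟨g, hg⟩ := Fintype.exists_ne_of_one_lt_card hG 1
  have hne : g⁻¹ • x ≠ x := fun h => hg (inv_eq_one.1 (hfree _ _ h))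
  have : ∃ j, (g⁻¹ • x) j ≠ x j := by
    by_contra hcon
    push Not at hcon
    exact hne (by ext j; exact hcon j)
  obtain ⟨j, hj⟩ := this
  let u : G → ℝ := fun h => (h⁻¹ • x) j
  obtain ⟨a, -, ha⟩ := Finset.exists_max_image Finset.univ u ⟨1, Finset.mem_univ _⟩
  let S : Finset G := Finset.univ.filter fun h => u h = u a
  refine ⟨(j, S), ?_⟩
  unfold gap
  rw [if_pos]
  · refine Finset.prod_pos fun h hh => Finset.prod_pos fun k hk => ?_
    have h1 : u h = u a := by simpa [S] using hh
    have h2 : u k ≠ u a := by simpa [S] using hk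
    have h3 : u k < u a := lt_of_le_of_ne (ha k (Finset.mem_univ _)) h2
    refine lt_max_of_lt_right ?_
    change 0 < u h - u k
    linarith
  · refine ⟨⟨a, by simp [S]⟩, ?_⟩
    intro hS
    have h1 : ∀ h, u h = u a := by
      intro h
      have : h ∈ S := by
        change S = Finset.univ at hS
        rw [hS]; exact Finset.mem_univ _
      simpa [S] using this
    apply hj
    have h2 := (h1 g).trans (h1 1).symm
    simpa [u] using h2

lemma exists_label {G : Type u} [Group G] [Fintype G] [MulAction G X3]
    (hcont : ∀ g : G, Continuous fun x : X3 => g • x)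
    (hfree : ∀ (g : G) (x : X3), g • x = x → g = 1)
    (hG : 1 < Fintype.card G) (hgen : ∀ g : G, g ≠ 1 → ∀ h : G, h ∈ Subgroup.zpowers g) :
    ∃ (V : Type u) (_ : Fintype V) (_ : MulAction G V) (lam : X3 → V),
      (∀ (g : G) x, lam (g • x) = g • lam x) ∧
      ∀ x, ∃ U : Set X3, IsOpen U ∧ x ∈ U ∧ ∀ y ∈ U, ∀ z ∈ U, ∀ g : G,
        lam z = g • lam y → g = 1 := by
  classical
  let act : MulAction G (Fin 3 × Finset G) :=
    { smul := fun g v => (v.1, g • v.2)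
      one_smul := fun v => by
        change (v.1, (1 : G) • v.2) = v
        simp
      mul_smul := fun g h v => by
        change (v.1, (g * h) • v.2) = (v.1, g • h • v.2)
        rw [mul_smul] }
  have act_def : ∀ (g : G) (v : Fin 3 × Finset G), g • v = (v.1, g • v.2) := fun _ _ => rfl
  let F : Fin 3 × Finset G → Set X3 := fun v => {x | ∀ w : Fin 3 × Finset G, gap w x ≤ gap v x}
  have hFc : ∀ v, IsClosed (F v) := by
    intro v
    have : F v = ⋂ w : Fin 3 × Finset G, {x | gap w x ≤ gap v x} := by
      ext x; simp [F]
    rw [this]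
    exact isClosed_iInter fun w => isClosed_le (gap_continuous hcont w) (gap_continuous hcont v)
  have hFcov : ∀ x, ∃ v, x ∈ F v := by
    intro x
    obtain ⟨v, -, hv⟩ := Finset.exists_max_image Finset.univ (fun v => gap v x)
      ⟨((0, ∅) : Fin 3 × Finset G), Finset.mem_univ _⟩
    exact ⟨v, fun w => hv w (Finset.mem_univ _)⟩
  have hgs : ∀ (g : G) (v : Fin 3 × Finset G) (x : X3), gap (g • v) (g • x) = gap v x := fun g v x => gap_smul g v x
  have hFs : ∀ (g : G) (v : Fin 3 × Finset G) (x : X3), x ∈ F v → g • x ∈ F (g • v) := by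
    intro g v x hx w
    have := hx (g⁻¹ • w)
    rw [hgs, ← hgs g (g⁻¹ • w) x, smul_inv_smul] at *
    exact this
  have hFpos : ∀ (v : Fin 3 × Finset G) (x : X3), x ∈ F v → 0 < gap v x := by
    intro v x hx
    obtain ⟨w, hw⟩ := exists_gap_pos hfree hG x
    exact hw.trans_le (hx w)
  have hFd : ∀ (g : G) (v : Fin 3 × Finset G) (x : X3), x ∈ F v → x ∈ F (g • v) → g = 1 := by
    intro g v x h1 h2
    obtain ⟨hne, hnu, hlt⟩ := gap_pos (hFpos _ _ h1)
    obtain ⟨-, -, hlt'⟩ := gap_pos (hFpos _ _ h2)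
    rw [act_def] at hlt'
    by_contra hg
    have hcard : (g • v.2).card = v.2.card := Finset.card_smul_finset _ _
    by_cases hsub : g • v.2 ⊆ v.2
    · have heq : g • v.2 = v.2 := Finset.eq_of_subset_of_card_le hsub hcard.ge
      have hst : ∀ h : G, h • v.2 = v.2 := by
        intro h
        have h3 : Subgroup.zpowers g ≤ MulAction.stabilizer G v.2 := by
          rw [Subgroup.zpowers_le]
          exact heq
        exact h3 (hgen g hg h)
      apply hnu
      obtain ⟨a, ha⟩ := hne
      ext b
      simp only [Finset.mem_univ, iff_true]
      rw [← hst (b * a⁻¹)]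
      exact Finset.mem_smul_finset.2 ⟨a, ha, by simp⟩
    · have hsub' : ¬ v.2 ⊆ g • v.2 := fun h =>
        hsub (Finset.eq_of_subset_of_card_le h hcard.le).ge
      obtain ⟨a, ha, ha'⟩ := Finset.not_subset.1 hsub
      obtain ⟨b, hb, hb'⟩ := Finset.not_subset.1 hsub'
      exact lt_asymm (hlt b hb a ha') (hlt' a ha b hb')
  choose l0 hl0 using hFcov
  obtain ⟨ρ, hρ⟩ := exists_equivariant (G := G) (Ω := X3)
  let lam : X3 → Fin 3 × Finset G := fun x => ρ x • l0 ((ρ x)⁻¹ • x)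
  have hlam : ∀ x, x ∈ F (lam x) := by
    intro x
    have := hFs (ρ x) _ _ (hl0 ((ρ x)⁻¹ • x))
    rwa [smul_inv_smul] at this
  refine ⟨Fin 3 × Finset G, inferInstance, act, lam, ?_, ?_⟩
  · intro g x
    have := hρ x (fun g => hfree g x) g
    simp only [lam, this, mul_smul, mul_inv_rev, inv_smul_smul]
  · intro x
    refine ⟨⋂ v : {v // x ∉ F v}, (F v.1)ᶜ, ?_, ?_, ?_⟩
    · exact isOpen_iInter_of_finite fun v => (hFc _).isOpen_compl
    · simp only [Set.mem_iInter]
      exact fun v => v.2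
    · have hU : ∀ y ∈ ⋂ v : {v // x ∉ F v}, (F v.1)ᶜ, x ∈ F (lam y) := by
        intro y hy
        by_contra hcon
        exact (Set.mem_iInter.1 hy ⟨_, hcon⟩) (hlam y)
      intro y hy z hz g hzy
      have h1 := hU y hy
      have h2 := hU z hz
      rw [hzy] at h2
      exact hFd g _ x h1 h2

end Cover

/-! ### An equivariant map from a join -/

/-- ambient space of the join of `m + 1` copies of `G` -/
abbrev EJ (G : Type*) (m : ℕ) := Fin (m + 1) × G → ℝ

/-- linear action of `G` -/
def actE {G : Type*} [Group G] (m : ℕ) (h : G) : EJ G m →ₗ[ℝ] EJ G m :=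
  LinearMap.funLeft ℝ ℝ (fun q : Fin (m + 1) × G => (q.1, h⁻¹ * q.2))

lemma actE_apply {G : Type*} [Group G] (m : ℕ) (h : G) (w : EJ G m) (i : Fin (m + 1)) (g : G) :
    actE m h w (i, g) = w (i, h⁻¹ * g) := rfl

section Join

variable {G : Type*} [Group G] [Fintype G] [MulAction G X3]

/-- conjugated contraction -/
def T (s : G → ℝ) (y : X3) : X3 := y + ∑ g : G, (g • ((1 - s g) • (g⁻¹ • y)) - y)

lemma T_one {s : G → ℝ} {a : G} (h : ∀ g, g ≠ a → s g = 0) (y : X3) :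
    T s y = a • ((1 - s a) • (a⁻¹ • y)) := by
  classical
  unfold T
  rw [Finset.sum_eq_single a]
  · abel
  · intro g _ hg
    simp [h g hg]
  · simp

lemma T_equiv {s : G → ℝ} (hs : ∃ a : G, ∀ g, g ≠ a → s g = 0) (h : G) (y : X3) :
    T (fun g => s (h⁻¹ * g)) (h • y) = h • T s y := by
  obtain ⟨a, ha⟩ := hs
  rw [T_one ha, T_one (a := h * a)]
  · simp [smul_smul, mul_assoc]
  · intro g hg
    apply ha
    rintro rfl
    simp at hg

/-- cut-off function -/
def sat (G : Type*) [Fintype G] (m : ℕ) (t : ℝ) : ℝ := min 1 (Fintype.card (Fin (m + 1) × G) * t)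

/-- partial equivariant maps -/
def FJ (m : ℕ) : ℕ → EJ G m → X3
  | 0, _ => 0
  | n + 1, w => T (fun g => sat G m (w (Fin.ofNat (m + 1) n, g))) (FJ m n w)

lemma FJ_continuous (hcont : ∀ g : G, Continuous fun x : X3 => g • x) (m n : ℕ) :
    Continuous (FJ (G := G) m n) := by
  induction n with
  | zero => exact continuous_const
  | succ n ih =>
    change Continuous fun w : EJ G m =>
      FJ m n w + ∑ g : G, (g • ((1 - sat G m (w (Fin.ofNat (m + 1) n, g))) • (g⁻¹ • FJ m n w))
        - FJ m n w)
    refine ih.add (continuous_finsetSum _ fun g _ => Continuous.sub ?_ ih)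
    have h1 : Continuous fun w : EJ G m => g⁻¹ • FJ m n w := (hcont g⁻¹).comp ih
    have h2 : Continuous fun w : EJ G m => 1 - sat G m (w (Fin.ofNat (m + 1) n, g)) := by
      unfold sat
      fun_prop
    have h3 : Continuous fun w : EJ G m =>
        (1 - sat G m (w (Fin.ofNat (m + 1) n, g))) • (g⁻¹ • FJ m n w) := by
      fun_prop
    exact (hcont g).comp h3

/-- points of the join -/
def Good (m : ℕ) (w : EJ G m) : Prop :=
  (∀ q, 0 ≤ w q) ∧ ∑ q, w q = 1 ∧ ∀ i g h, w (i, g) ≠ 0 → w (i, h) ≠ 0 → g = h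

lemma FJ_equiv (m : ℕ) (w : EJ G m) (hw : Good m w) (h : G) :
    FJ m (m + 1) (actE m h w) = h • FJ m (m + 1) w := by
  obtain ⟨hpos, hsum, huniq⟩ := hw
  have hs : ∀ i : Fin (m + 1), ∃ a : G, ∀ g, g ≠ a → sat G m (w (i, g)) = 0 := by
    intro i
    by_cases hz : ∃ a, w (i, a) ≠ 0
    · obtain ⟨a, ha⟩ := hz
      refine ⟨a, fun g hg => ?_⟩
      have : w (i, g) = 0 := by
        by_contra hcon
        exact hg (huniq i g a hcon ha)
      simp [sat, this]
    · push Not at hz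
      exact ⟨1, fun g _ => by simp [sat, hz g]⟩
  have hbig : ∃ q : Fin (m + 1) × G, sat G m (w q) = 1 := by
    by_contra hcon
    push Not at hcon
    have hlt : ∀ q : Fin (m + 1) × G, (Fintype.card (Fin (m + 1) × G) : ℝ) * w q < 1 := by
      intro q
      by_contra h2
      push Not at h2
      exact hcon q (min_eq_left h2)
    have h3 : ∑ q : Fin (m + 1) × G, (Fintype.card (Fin (m + 1) × G) : ℝ) * w q
        < ∑ q : Fin (m + 1) × G, (1 : ℝ) :=
      Finset.sum_lt_sum_of_nonempty ⟨(0, 1), Finset.mem_univ _⟩ fun q _ => hlt q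
    rw [← Finset.mul_sum, hsum] at h3
    simp at h3
  obtain ⟨⟨i, a⟩, hia⟩ := hbig
  have key : ∀ n, i.1 < n → FJ m n (actE m h w) = h • FJ m n w := by
    intro n
    induction n with
    | zero => intro h0; omega
    | succ n ih =>
      intro hn
      rcases Nat.lt_succ_iff_lt_or_eq.1 hn with hlt | heq
      · simp only [FJ]
        rw [ih hlt, ← T_equiv (hs _)]
        rfl
      · have hi : Fin.ofNat (m + 1) n = i := by
          ext
          simp only [Fin.val_ofNat]
          rw [Nat.mod_eq_of_lt (by omega), heq]
        simp only [FJ]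
        rw [hi]
        obtain ⟨b, hb⟩ := hs i
        have hab : a = b := by
          by_contra hab
          rw [hb a hab] at hia
          exact zero_ne_one hia
        subst hab
        rw [T_one hb, T_one (a := h * a)]
        · simp only [actE_apply, inv_mul_cancel_left, hia, sub_self, zero_smul, mul_smul]
        · intro g hg
          rw [actE_apply]
          apply hb
          rintro rfl
          simp at hg
  exact key (m + 1) i.2

end Join

/-! ### The tower of chains in the join -/

section Tower

variable {G : Type*} [Group G] [Fintype G]

/-- translation -/
def shift (h : G) (q : ℕ × G) : ℕ × G := (q.1, h * q.2)

/-- The operators of the periodic resolution. -/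
def op (γ : G) (n : ℕ) : Ch (ℕ × G) →ₗ[ℤ] Ch (ℕ × G) :=
  if Even n then push (shift γ) - LinearMap.id else ∑ h : G, push (shift h)

/-- The tower of chains. -/
def tower (γ : G) : ℕ → Ch (ℕ × G)
  | 0 => Finsupp.single [(0, 1)] 1
  | n + 1 => cone (n + 1, 1) (op γ n (tower γ n))

lemma bdry_op (γ : G) (n : ℕ) (z : Ch (ℕ × G)) : bdry (op γ n z) = op γ n (bdry z) := by
  unfold op
  split_ifs
  · simp [push_bdry]
  · simp [push_bdry]

lemma shift_shift (g h : G) : shift g ∘ shift h = shift (g * h) := by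
  funext q
  simp [shift, mul_assoc]

lemma op_op (γ : G) (n : ℕ) (z : Ch (ℕ × G)) : op γ (n + 1) (op γ n z) = 0 := by
  unfold op
  by_cases hn : Even n
  · have hn' : ¬ Even (n + 1) := by simpa [Nat.even_add_one] using hn
    simp only [if_pos hn, if_neg hn', LinearMap.sub_apply, LinearMap.sum_apply, map_sub,
      push_push, shift_shift, LinearMap.id_apply, Finset.sum_sub_distrib]
    rw [sub_eq_zero]
    exact Fintype.sum_equiv (Equiv.mulRight γ) _ _ fun _ => rfl
  · have hn' : Even (n + 1) := by simpa [Nat.even_add_one] using hn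
    simp only [if_neg hn, if_pos hn', LinearMap.sub_apply, LinearMap.sum_apply, map_sum,
      push_push, shift_shift, LinearMap.id_apply, Finset.sum_sub_distrib]
    rw [sub_eq_zero]
    exact Fintype.sum_equiv (Equiv.mulLeft γ) _ _ fun _ => rfl

lemma bdry_tower_zero (γ : G) : bdry (tower γ 0) = Finsupp.single [] 1 := by
  simp [tower, bd]

lemma bdry_tower (γ : G) (n : ℕ) : bdry (tower γ (n + 1)) = op γ n (tower γ n) := by
  have h : bdry (op γ n (tower γ n)) = 0 := by
    cases n with
    | zero =>
      rw [bdry_op, bdry_tower_zero]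
      simp [op]
    | succ n =>
      rw [bdry_op, bdry_tower γ n, op_op]
  rw [tower, bdry_cone, h]
  simp

/-- Lists of `n + 1` vertices of different colours at most `n`. -/
def Col (n : ℕ) (l : List (ℕ × G)) : Prop :=
  l.length = n + 1 ∧ (∀ q ∈ l, q.1 ≤ n) ∧ ∀ q ∈ l, ∀ q' ∈ l, q.1 = q'.1 → q = q'

lemma push_shift_on (n : ℕ) (h : G) {z : Ch (ℕ × G)} (hz : z ∈ On (Col n)) :
    push (shift h) z ∈ On (Col (G := G) n) := by
  refine on_map _ _ ?_ hz
  intro l hl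
  rw [push_single]
  refine single_on ⟨by simpa using hl.1, ?_, ?_⟩ _
  · intro q hq
    obtain ⟨q', hq', rfl⟩ := List.mem_map.1 hq
    exact hl.2.1 q' hq'
  · intro q hq r hr hqr
    obtain ⟨q', hq', rfl⟩ := List.mem_map.1 hq
    obtain ⟨r', hr', rfl⟩ := List.mem_map.1 hr
    rw [hl.2.2 q' hq' r' hr' hqr]

lemma op_on (γ : G) (k n : ℕ) {z : Ch (ℕ × G)} (hz : z ∈ On (Col n)) :
    op γ k z ∈ On (Col (G := G) n) := by
  unfold op
  split_ifs
  · exact Submodule.sub_mem _ (push_shift_on n γ hz) hz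
  · rw [LinearMap.sum_apply]
    exact Submodule.sum_mem _ fun h _ => push_shift_on n h hz

lemma tower_on (γ : G) (n : ℕ) : tower γ n ∈ On (Col (G := G) n) := by
  induction n with
  | zero =>
    refine single_on ⟨rfl, ?_, ?_⟩ _
    · simp
    · simp
  | succ n ih =>
    refine on_map _ _ ?_ (op_on γ n n ih)
    intro l hl
    rw [cone_single]
    refine single_on ⟨by simp [hl.1], ?_, ?_⟩ _
    · intro q hq
      rcases List.mem_cons.1 hq with rfl | hq
      · exact le_rfl
      · exact (hl.2.1 q hq).trans (by omega)
    · intro q hq r hr hqr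
      rcases List.mem_cons.1 hq with rfl | hq <;> rcases List.mem_cons.1 hr with rfl | hr
      · rfl
      · have := hl.2.1 r hr
        simp only at hqr
        omega
      · have := hl.2.1 q hq
        simp only at hqr
        omega
      · exact hl.2.2 q hq r hr hqr

open Classical in
/-- Vertices of the join. -/
def vert (m : ℕ) (q : ℕ × G) : EJ G m := fun r => if (r.1 : ℕ) = q.1 ∧ r.2 = q.2 then 1 else 0

lemma vert_shift (m : ℕ) (h : G) (q : ℕ × G) : vert m (shift h q) = actE m h (vert m q) := by
  funext ⟨i, g⟩
  rw [actE_apply]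
  have hiff : g = h * q.2 ↔ h⁻¹ * g = q.2 := inv_mul_eq_iff_eq_mul.symm
  unfold vert
  by_cases hc : (i : ℕ) = q.1 ∧ h⁻¹ * g = q.2
  · rw [if_pos hc]
    exact if_pos ⟨hc.1, hiff.2 hc.2⟩
  · rw [if_neg hc]
    exact if_neg fun hd => hc ⟨hd.1, hiff.1 hd.2⟩

/-- The face of the join spanned by a list of vertices. -/
def face (m : ℕ) (l : List (ℕ × G)) : Set (EJ G m) :=
  {w | (∀ q, 0 ≤ w q) ∧ ∑ q, w q = 1 ∧ ∀ q : Fin (m + 1) × G, ((q.1 : ℕ), q.2) ∉ l → w q = 0}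

lemma face_convex (m : ℕ) (l : List (ℕ × G)) : Convex ℝ (face m l) := by
  intro x hx y hy a b ha hb hab
  refine ⟨?_, ?_, ?_⟩
  · intro q
    have := hx.1 q
    have := hy.1 q
    simp only [Pi.add_apply, Pi.smul_apply, smul_eq_mul]
    positivity
  · simp only [Pi.add_apply, Pi.smul_apply, smul_eq_mul, Finset.sum_add_distrib,
      ← Finset.mul_sum, hx.2.1, hy.2.1]
    linarith
  · intro q hq
    simp [hx.2.2 q hq, hy.2.2 q hq]

lemma vert_mem_face (m : ℕ) {l : List (ℕ × G)} {q : ℕ × G} (hq : q ∈ l) (hm : q.1 ≤ m) :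
    vert m q ∈ face m l := by
  classical
  refine ⟨?_, ?_, ?_⟩
  · intro r
    unfold vert
    split_ifs <;> norm_num
  · rw [Finset.sum_eq_single ((⟨q.1, by omega⟩ : Fin (m + 1)), q.2)]
    · simp [vert]
    · intro r _ hr
      simp only [vert]
      rw [if_neg]
      rintro ⟨h1, h2⟩
      apply hr
      ext
      · exact h1
      · exact h2
    · simp
  · intro r hr
    simp only [vert]
    rw [if_neg]
    rintro ⟨h1, h2⟩
    apply hr
    rw [h1, h2]
    exact hq

lemma face_good {m n : ℕ} {l : List (ℕ × G)} (hl : Col n l) {w : EJ G m} (hw : w ∈ face m l) :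
    Good m w := by
  refine ⟨hw.1, hw.2.1, ?_⟩
  intro i g h hg hh
  have h1 : ((i : ℕ), g) ∈ l := by
    by_contra hcon
    exact hg (hw.2.2 (i, g) hcon)
  have h2 : ((i : ℕ), h) ∈ l := by
    by_contra hcon
    exact hh (hw.2.2 (i, h) hcon)
  have := hl.2.2 _ h1 _ h2 rfl
  exact (Prod.ext_iff.1 this).2

lemma dist_vert (m : ℕ) (q r : ℕ × G) : dist (vert m q) (vert m r) ≤ 1 := by
  rw [dist_pi_le_iff zero_le_one]
  intro s
  unfold vert
  split_ifs <;> norm_num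

/-- Small simplices in the join. -/
def Fine (m : ℕ) (d : ℝ) (n : ℕ) (l : List (EJ G m)) : Prop :=
  ∃ l0 : List (ℕ × G), Col n l0 ∧ Small d (face m l0) (n + 1) l

lemma fine_iter (γ : G) (m n : ℕ) (hn : n ≤ m) (N : ℕ) :
    (sd ^ N : Ch (EJ G m) →ₗ[ℤ] Ch (EJ G m)) (push (vert m) (tower γ n)) ∈
      On (Fine m ((1 - ((m + 1 : ℕ) : ℝ)⁻¹) ^ N) n) := by
  induction N with
  | zero =>
    simp only [pow_zero]
    change push (vert m) (tower γ n) ∈ _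
    refine on_map (push (vert m)) _ ?_ (tower_on γ n)
    intro l hl
    rw [push_single]
    refine single_on ⟨l, hl, by simpa using hl.1, ?_, ?_⟩ _
    · intro x hx
      obtain ⟨q, hq, rfl⟩ := List.mem_map.1 hx
      exact vert_mem_face m hq ((hl.2.1 q hq).trans hn)
    · intro x hx y hy
      obtain ⟨q, hq, rfl⟩ := List.mem_map.1 hx
      obtain ⟨r, hr, rfl⟩ := List.mem_map.1 hy
      exact dist_vert m q r
  | succ N ih =>
    have hs : (sd ^ (N + 1) : Ch (EJ G m) →ₗ[ℤ] Ch (EJ G m)) = sd * sd ^ N := pow_succ' _ _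
    rw [hs, Module.End.mul_apply]
    refine on_map sd _ ?_ ih
    rintro l ⟨l0, hl0, hl⟩
    refine on_mono ?_ (sd_small (L := m + 1) (n + 1) (by omega) _ (face_convex m l0) l hl)
    intro t ht
    rw [pow_succ']
    exact ⟨l0, hl0, ht⟩

lemma iter_bdry {E : Type*} [NormedAddCommGroup E] [NormedSpace ℝ E] (N : ℕ) (z : Ch E) :
    (sd ^ N : Ch E →ₗ[ℤ] Ch E) (bdry z) = bdry ((sd ^ N : Ch E →ₗ[ℤ] Ch E) z) := by
  induction N with
  | zero => rfl
  | succ N ih => rw [pow_succ', Module.End.mul_apply, Module.End.mul_apply, ih, sd_bdry]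

lemma iter_push {E : Type*} [NormedAddCommGroup E] [NormedSpace ℝ E] (A : E →ₗ[ℝ] E)
    (N : ℕ) (z : Ch E) :
    (sd ^ N : Ch E →ₗ[ℤ] Ch E) (push A z) = push A ((sd ^ N : Ch E →ₗ[ℤ] Ch E) z) := by
  induction N with
  | zero => rfl
  | succ N ih => rw [pow_succ', Module.End.mul_apply, Module.End.mul_apply, ih, sd_push]

lemma iter_nil {E : Type*} [NormedAddCommGroup E] [NormedSpace ℝ E] (N : ℕ) :
    (sd ^ N : Ch E →ₗ[ℤ] Ch E) (Finsupp.single [] 1) = Finsupp.single [] 1 := by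
  induction N with
  | zero => rfl
  | succ N ih => rw [pow_succ', Module.End.mul_apply, ih, sd_single_nil]

end Tower

/-! ### The main argument -/

theorem no_free_cyclic {G : Type*} [Group G] [Fintype G] [MulAction G X3]
    (hcont : ∀ g : G, Continuous fun x : X3 => g • x)
    (hfree : ∀ (g : G) (x : X3), g • x = x → g = 1)
    (hG : 1 < Fintype.card G) (hgen : ∀ g : G, g ≠ 1 → ∀ h : G, h ∈ Subgroup.zpowers g) :
    False := by
  classical
  obtain ⟨γ, hγ1⟩ := Fintype.exists_ne_of_one_lt_card hG 1
  have hγ := hgen γ hγ1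
  obtain ⟨V, _, _, lam, hlam, hloc⟩ := exists_label hcont hfree hG hgen
  let K := Fintype.card V
  let m := 2 * K
  let f : EJ G m → X3 := FJ m (m + 1)
  have hf : Continuous f := FJ_continuous hcont m (m + 1)
  choose U hUo hUm hU using hloc
  obtain ⟨ε, hε, hleb⟩ := lebesgue_number_lemma_of_metric
    (isCompact_stdSimplex ℝ (Fin (m + 1) × G)) (c := fun x : X3 => f ⁻¹' U x)
    (fun x => (hUo x).preimage hf)
    (fun w _ => Set.mem_iUnion.2 ⟨f w, hUm (f w)⟩)
  have hr0 : (0 : ℝ) ≤ 1 - ((m + 1 : ℕ) : ℝ)⁻¹ := by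
    have : ((m + 1 : ℕ) : ℝ)⁻¹ ≤ 1 := inv_le_one_of_one_le₀ (by simp)
    linarith
  have hr1 : 1 - ((m + 1 : ℕ) : ℝ)⁻¹ < 1 := by
    have : (0 : ℝ) < ((m + 1 : ℕ) : ℝ)⁻¹ := by positivity
    linarith
  obtain ⟨N, hN⟩ := exists_pow_lt_of_lt_one hε hr1
  let e : ℕ → Ch (EJ G m) := fun n =>
    (sd ^ N : Ch (EJ G m) →ₗ[ℤ] Ch (EJ G m)) (push (vert m) (tower γ n))
  have he : ∀ n ≤ m, e n ∈ On (Fine m ((1 - ((m + 1 : ℕ) : ℝ)⁻¹) ^ N) n) :=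
    fun n hn => fine_iter γ m n hn N
  let c : ℕ → Ch V := fun n => push (lam ∘ f) (e n)
  have hequiv : ∀ n ≤ m, ∀ h : G,
      push (lam ∘ f) (push (actE m h) (e n)) = push (h • · : V → V) (c n) := by
    intro n hn h
    refine on_congr (push (lam ∘ f) ∘ₗ push (actE m h))
      (push (h • · : V → V) ∘ₗ push (lam ∘ f)) ?_ (he n hn)
    rintro l ⟨l0, hl0, hl⟩
    simp only [LinearMap.comp_apply, push_single, List.map_map]
    congr 1
    apply List.map_congr_left
    intro x hx
    simp only [Function.comp_apply]
    have h1 : f (actE m h x) = h • f x := FJ_equiv m x (face_good hl0 (hl.2.1 x hx)) h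
    rw [h1, hlam]
  have hpe : ∀ n (h : G), push (vert m) (push (shift h) (tower γ n))
      = push (actE m h) (push (vert m) (tower γ n)) := by
    intro n h
    rw [push_push, push_push]
    congr 2
    funext q
    exact vert_shift m h q
  refine no_tower γ hγ K (by omega) hG c ?_ ?_ ?_ ?_
  · intro n hn
    refine on_map _ _ ?_ (he n hn)
    rintro l ⟨l0, hl0, hl⟩
    rw [push_single]
    refine single_on ⟨?_, by simpa using hl.1⟩ _
    intro v hv w hw g hg
    obtain ⟨x, hx, rfl⟩ := List.mem_map.1 hv
    obtain ⟨y, hy, rfl⟩ := List.mem_map.1 hw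
    have hxs : x ∈ stdSimplex ℝ (Fin (m + 1) × G) := ⟨(hl.2.1 x hx).1, (hl.2.1 x hx).2.1⟩
    obtain ⟨u, hu⟩ := hleb x hxs
    refine hU u (f x) (hu (Metric.mem_ball_self hε)) (f y) (hu ?_) g hg
    exact (hl.2.2 y hy x hx).trans_lt hN
  · change bdry (push (lam ∘ f) ((sd ^ N : Ch (EJ G m) →ₗ[ℤ] Ch (EJ G m))
      (push (vert m) (tower γ 0)))) = _
    rw [← push_bdry, ← iter_bdry, ← push_bdry, bdry_tower_zero]
    simp [iter_nil]
  · intro k hk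
    change bdry (push (lam ∘ f) ((sd ^ N : Ch (EJ G m) →ₗ[ℤ] Ch (EJ G m))
      (push (vert m) (tower γ (2 * k + 1))))) = _
    rw [← push_bdry, ← iter_bdry, ← push_bdry, bdry_tower, op, if_pos (by simp),
      ← hequiv (2 * k) (by omega) γ]
    simp only [LinearMap.sub_apply, LinearMap.id_apply, map_sub, hpe, iter_push]
    rfl
  · intro k hk
    change bdry (push (lam ∘ f) ((sd ^ N : Ch (EJ G m) →ₗ[ℤ] Ch (EJ G m))
      (push (vert m) (tower γ (2 * k + 1 + 1))))) = _
    rw [← push_bdry, ← iter_bdry, ← push_bdry, bdry_tower, op, if_neg (by simp)]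
    simp only [LinearMap.sum_apply, map_sum, hpe, iter_push]
    exact Finset.sum_congr rfl fun h _ => hequiv (2 * k + 1) (by omega) h

end

end FreeR3



/-- A finite group acting freely by homeomorphisms on Euclidean
3-space is trivial.  (Equivalently, any group acting freely and properly
discontinuously by homeomorphisms on `ℝ³` is torsion-free.) -/
theorem finite_group_free_action_R3_trivial
    (G : Type*) [Group G] [Finite G]
    [MulAction G (EuclideanSpace ℝ (Fin 3))]
    (hcont : ∀ g : G, Continuous fun x : EuclideanSpace ℝ (Fin 3) => g • x)
    (hfree : ∀ (g : G) (x : EuclideanSpace ℝ (Fin 3)), g • x = x → g = 1) :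
    ∀ g : G, g = 1 := by
  classical
  intro g
  by_contra hg
  have hn1 : orderOf g ≠ 1 := fun h => hg (orderOf_eq_one_iff.1 h)
  obtain ⟨p, hp, hpd⟩ := Nat.exists_prime_and_dvd hn1
  obtain ⟨k, hk⟩ := hpd
  have hpos : 0 < orderOf g := orderOf_pos g
  have hk0 : k ≠ 0 := by
    rintro rfl
    rw [mul_zero] at hk
    omega
  have hord : orderOf (g ^ k) = p := by
    rw [orderOf_pow_of_dvd hk0 ⟨p, by rw [hk, mul_comm]⟩, hk]
    exact Nat.mul_div_cancel _ (Nat.pos_of_ne_zero hk0)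
  let H : Subgroup G := Subgroup.zpowers (g ^ k)
  haveI : Fintype H := Fintype.ofFinite H
  have hcard : Fintype.card H = p := by
    rw [← Nat.card_eq_fintype_card, Nat.card_zpowers, hord]
  haveI : Fact p.Prime := ⟨hp⟩
  refine FreeR3.no_free_cyclic (G := H) (fun h => hcont h.1) ?_ ?_ ?_
  · intro h x hx
    exact Subtype.ext (hfree h.1 x hx)
  · rw [hcard]; exact hp.one_lt
  · intro h hh a
    exact mem_zpowers_of_prime_card (p := p) (by rw [Nat.card_eq_fintype_card, hcard]) hh
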